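/- arXiv:2502.04872 — 2 statements merged into one kernel-verified Lean document; each statement's English description precedes it below -/
import Mathlib

section
/- Let R = K[a,b,x,y] and I = (a^p x^p, a^k b^k, b^q y^q) with positive integers p, q, k. If R/I^n is Cohen-Macaulay for some n ≥ 2, then min{p, q} ≥ 2k. -/
open MvPolynomial

/-- `R/I` is Cohen–Macaulay: there is a regular sequence on `R/I` contained in the
maximal ideal generated by the variables whose length equals the Krull dimension of `R/I`. -/
def IsCMQuot {K : Type*} [Field K] {σ : Type*} (I : Ideal (MvPolynomial σ K)) : Prop :=
  ∃ rs : List (MvPolynomial σ K),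
    (∀ r ∈ rs, r ∈ Ideal.span (Set.range (X : σ → MvPolynomial σ K))) ∧
    RingTheory.Sequence.IsRegular (MvPolynomial σ K ⧸ I) rs ∧
    (rs.length : WithBot (WithTop ℕ)) = ringKrullDim (MvPolynomial σ K ⧸ I)

/-!
Hartshorne's connectedness argument: if `M` has depth at least two with respect to `𝔞 ⊔ 𝔟`, then
every element of `M` killed by `𝔞 * 𝔟` is a sum of an element killed by `𝔞` and one killed by `𝔟`.
For `M = R/J` with `J` a monomial ideal, a monomial `m`, and the variables split into two parts
such that `X i * X j * m ∈ J` across the parts, comparing coefficients of `m` in such a sum shows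
that one of the parts multiplies `m` into `J`.

By the symmetry exchanging `a, x` with `b, y` we may assume `p ≤ q`. Since `I ^ n ⊆ (a, b)`, the
quotient has dimension at least two, so Cohen–Macaulayness provides a regular sequence of length
two. If `p < 2 * k`, the parts `{b, x}` and `{a, y}` and the monomial
`m = a ^ (k n - 1) b ^ (k (n - 1) + max k q - 1) x ^ (p - 1) y ^ (q - 1)` contradict the above:
`b m ∉ I ^ n`, while `a m ∉ I ^ n` if `q ≤ k` and `y m ∉ I ^ n` if `k ≤ q`. The one product that
uses `p < 2 * k` is `x y m`, which is divisible by `(a x) ^ p (a b) ^ (k (n - 2)) (b y) ^ q`.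
-/

open Finsupp (single)
open Submodule (torsionBySet mem_torsionBySet_iff)
open RingTheory.Sequence (IsWeaklyRegular isWeaklyRegular_cons_iff)
open scoped Pointwise

section RegularPair

variable {A M : Type*} [CommRing A] [AddCommGroup M] [Module A M] {r t : A}

theorem exists_eq_smul_of_smul_eq_smul (hrt : IsWeaklyRegular M [r, t]) {x y : M}
    (hxy : t • x = r • y) : ∃ u, x = r • u := by
  have ht : IsSMulRegular (QuotSMulTop r M) t := by
    rw [isWeaklyRegular_cons_iff, isWeaklyRegular_cons_iff] at hrt
    exact hrt.2.1
  have htx : t • x ∈ r • (⊤ : Submodule A M) :=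
    hxy ▸ Submodule.smul_mem_pointwise_smul y r ⊤ trivial
  obtain ⟨u, -, hu⟩ := (Submodule.mem_smul_pointwise_iff_exists ..).mp
    ((isSMulRegular_quotient_iff_mem_of_smul_mem _ _).mp ht x htx)
  exact ⟨u, hu.symm⟩

theorem torsionBySet_mul_le_sup (hrt : IsWeaklyRegular M [r, t]) {𝔞 𝔟 : Ideal A}
    (hr : r ∈ 𝔞 ⊔ 𝔟) (ht : t ∈ 𝔞 ⊔ 𝔟) :
    torsionBySet A M ↑(𝔞 * 𝔟) ≤ torsionBySet A M 𝔞 ⊔ torsionBySet A M 𝔟 := by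
  -- Along `𝔞 ⊔ 𝔟` write `r = r₁ + r₂` and `t = t₁ + t₂`. Then `t • r₁ • v = r • t₁ • v`, so
  -- `r₁ • v = r • u` for some `u`, and `v = (v - u) + u` is the required decomposition.
  intro v hv
  have hab {a b : A} (ha : a ∈ 𝔞) (hb : b ∈ 𝔟) : (a * b) • v = 0 :=
    (mem_torsionBySet_iff _ v).mp hv ⟨a * b, Ideal.mul_mem_mul ha hb⟩
  have r_regular : IsSMulRegular M r := ((isWeaklyRegular_cons_iff M r [t]).mp hrt).1
  obtain ⟨r₁, hr₁, r₂, hr₂, rfl⟩ := Submodule.mem_sup.mp hr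
  obtain ⟨t₁, ht₁, t₂, ht₂, rfl⟩ := Submodule.mem_sup.mp ht
  obtain ⟨u, hu⟩ : ∃ u, r₁ • v = (r₁ + r₂) • u := by
    refine exists_eq_smul_of_smul_eq_smul hrt (y := t₁ • v) ?_
    linear_combination (norm := module) hab hr₁ ht₂ - hab ht₁ hr₂
  refine Submodule.mem_sup.mpr ⟨v - u, ?_, u, ?_, sub_add_cancel v u⟩ <;>
    refine (mem_torsionBySet_iff _ _).mpr fun ⟨c, hc⟩ => r_regular ?_
  · linear_combination (norm := module) hab hc hr₂ + c • hu
  · linear_combination (norm := module) hab hr₁ hc - c • hu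

theorem exists_mul_sub_mem_and_mul_mem {J : Ideal A} (hrt : IsWeaklyRegular (A ⧸ J) [r, t])
    {s₁ s₂ : Set A} (hr : r ∈ Ideal.span s₁ ⊔ Ideal.span s₂)
    (ht : t ∈ Ideal.span s₁ ⊔ Ideal.span s₂) {f : A}
    (hf : ∀ a ∈ s₁, ∀ b ∈ s₂, a * b * f ∈ J) :
    ∃ u, (∀ a ∈ s₁, a * (f - u) ∈ J) ∧ ∀ b ∈ s₂, b * u ∈ J := by
  have mk_mem_torsionBySet (s : Set A) (g : A) :
      Ideal.Quotient.mk J g ∈ torsionBySet A (A ⧸ J) (Ideal.span s) ↔ ∀ a ∈ s, a * g ∈ J := by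
    rw [← Submodule.torsionBySet_eq_torsionBySet_span, mem_torsionBySet_iff, Subtype.forall]
    exact forall₂_congr fun a _ => Ideal.Quotient.eq_zero_iff_mem
  have hf_torsion := (mk_mem_torsionBySet (s₁ * s₂) f).mpr <| by
    rintro _ ⟨a, ha, b, hb, rfl⟩
    exact hf a ha b hb
  rw [← Ideal.span_mul_span'] at hf_torsion
  obtain ⟨w, hw, u, hu, huw⟩ :=
    Submodule.mem_sup.mp (torsionBySet_mul_le_sup hrt hr ht hf_torsion)
  obtain ⟨u, rfl⟩ := Ideal.Quotient.mk_surjective u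
  obtain rfl : w = Ideal.Quotient.mk J (f - u) := by rw [map_sub, ← huw, add_sub_cancel_right]
  exact ⟨u, (mk_mem_torsionBySet s₁ _).mp hw, (mk_mem_torsionBySet s₂ _).mp hu⟩

end RegularPair

section MonomialIdeal

variable {σ R : Type*}

theorem monomial_mem_span_monomial_iff [CommSemiring R] [Nontrivial R] {E : Set (σ →₀ ℕ)}
    {s : σ →₀ ℕ} :
    monomial s 1 ∈ Ideal.span ((fun e => monomial e (1 : R)) '' E) ↔ s ∈ upperClosure E := by
  classical
  simp [mem_ideal_span_monomial_image, support_monomial]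

theorem mem_upperClosure_of_X_mul_mem_span_monomial [CommSemiring R] {E : Set (σ →₀ ℕ)}
    {f : MvPolynomial σ R} {i : σ} {m : σ →₀ ℕ}
    (hf : X i * f ∈ Ideal.span ((fun e => monomial e (1 : R)) '' E)) (hm : coeff m f ≠ 0) :
    single i 1 + m ∈ upperClosure E :=
  mem_ideal_span_monomial_image.mp hf _ (by rwa [mem_support_iff, coeff_X_mul])

theorem span_monomial_pow [CommSemiring R] (E : Set (σ →₀ ℕ)) (n : ℕ) :
    Ideal.span ((fun e => monomial e (1 : R)) '' E) ^ n =
      Ideal.span ((fun e => monomial e (1 : R)) '' (n • E)) := by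
  induction n with
  | zero => simp
  | succ n ih =>
    rw [pow_succ, ih, Ideal.span_mul_span', succ_nsmul]
    congr 1
    refine (Set.image_image2_distrib fun a b => ?_).symm
    rw [monomial_mul, one_mul]

theorem idealOfVars_eq_sup_compl [CommSemiring R] (S : Set σ) :
    idealOfVars σ R = Ideal.span (X '' S) ⊔ Ideal.span (X '' Sᶜ) := by
  rw [← Ideal.span_union, ← Set.image_union, Set.union_compl_self, Set.image_univ]

theorem single_add_mem_or_of_isWeaklyRegular [CommRing R] [Nontrivial R] {E : Set (σ →₀ ℕ)}
    {r t : MvPolynomial σ R}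
    (hrt : IsWeaklyRegular
      (MvPolynomial σ R ⧸ Ideal.span ((fun e => monomial e (1 : R)) '' E)) [r, t])
    (hr : r ∈ idealOfVars σ R) (ht : t ∈ idealOfVars σ R) {S : Set σ} {m : σ →₀ ℕ}
    (hS : ∀ i ∈ S, ∀ j ∈ Sᶜ, single i 1 + (single j 1 + m) ∈ upperClosure E) :
    (∀ i ∈ S, single i 1 + m ∈ upperClosure E) ∨
      ∀ j ∈ Sᶜ, single j 1 + m ∈ upperClosure E := by
  classical
  rw [idealOfVars_eq_sup_compl S] at hr ht
  obtain ⟨u, hmu, hu⟩ := exists_mul_sub_mem_and_mul_mem hrt hr ht (f := monomial m 1) <| by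
    rintro _ ⟨i, hi, rfl⟩ _ ⟨j, hj, rfl⟩
    simpa [X, monomial_mul, add_assoc] using monomial_mem_span_monomial_iff.mpr (hS i hi j hj)
  by_cases hcoeff : coeff m u = 0
  · refine .inl fun i hi => mem_upperClosure_of_X_mul_mem_span_monomial
      (hmu _ (Set.mem_image_of_mem X hi)) ?_
    rw [coeff_sub, hcoeff, sub_zero, coeff_monomial, if_pos rfl]
    exact one_ne_zero
  · exact .inr fun j hj => mem_upperClosure_of_X_mul_mem_span_monomial
      (hu _ (Set.mem_image_of_mem X hj)) hcoeff

theorem ringKrullDim_add_card_compl_le [CommRing R] [IsNoetherianRing R] [Finite σ] {S : Set σ}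
    {J : Ideal (MvPolynomial σ R)} (hJ : J ≤ Ideal.span (X '' S)) :
    ringKrullDim R + Nat.card ↥Sᶜ ≤ ringKrullDim (MvPolynomial σ R ⧸ J) := by
  have killCompl_surjective :
      Function.Surjective (killCompl (R := R) (Subtype.val_injective (p := (· ∈ Sᶜ)))) :=
    fun f => ⟨_, killCompl_rename_app _ f⟩
  have killCompl_eq_zero : ∀ f ∈ J, killCompl (Subtype.val_injective (p := (· ∈ Sᶜ))) f = 0 := by
    suffices Ideal.span (X '' S) ≤
        RingHom.ker (killCompl (R := R) (Subtype.val_injective (p := (· ∈ Sᶜ)))) from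
      fun f hf => this (hJ hf)
    rw [Ideal.span_le]
    rintro _ ⟨i, hi, rfl⟩
    simp [killCompl, hi]
  rw [← ringKrullDim_of_isNoetherianRing]
  exact ringKrullDim_le_of_surjective (Ideal.Quotient.lift J (killCompl _).toRingHom
    killCompl_eq_zero) (Ideal.Quotient.lift_surjective_of_surjective _ _ killCompl_surjective)

end MonomialIdeal

namespace IsCMQuot

variable {K σ τ : Type*} [Field K]

theorem exists_isWeaklyRegular_pair {I : Ideal (MvPolynomial σ K)} (hI : IsCMQuot I)
    (hdim : 2 ≤ ringKrullDim (MvPolynomial σ K ⧸ I)) :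
    ∃ r ∈ idealOfVars σ K, ∃ t ∈ idealOfVars σ K,
      IsWeaklyRegular (MvPolynomial σ K ⧸ I) [r, t] := by
  obtain ⟨rs, hmem, hreg, hlen⟩ := hI
  have hlen : 2 ≤ rs.length := by
    have : ((2 : ℕ) : WithBot ℕ∞) ≤ (rs.length : WithBot ℕ∞) := hlen ▸ hdim
    exact_mod_cast this
  match rs, hlen with
  | r :: t :: rs, _ =>
    refine ⟨r, hmem r (by simp), t, hmem t (by simp), ?_⟩
    exact ((RingTheory.Sequence.isWeaklyRegular_append_iff _ [r, t] rs).mp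
      hreg.toIsWeaklyRegular).1

theorem map_renameEquiv {I : Ideal (MvPolynomial σ K)} (hI : IsCMQuot I) (e : σ ≃ τ) :
    IsCMQuot (I.map (renameEquiv K e)) := by
  obtain ⟨rs, hmem, hreg, hlen⟩ := hI
  let quotEquiv := Ideal.quotientEquiv I (I.map (renameEquiv K e)) (renameEquiv K e) rfl
  refine ⟨rs.map (renameEquiv K e), ?_, ?_, ?_⟩
  · have map_idealOfVars_le : (idealOfVars σ K).map (renameEquiv K e) ≤ idealOfVars τ K := by
      rw [Ideal.map_span, Ideal.span_le]
      rintro _ ⟨_, ⟨i, rfl⟩, rfl⟩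
      exact Ideal.subset_span ⟨e i, by simp⟩
    exact List.forall_mem_map.mpr fun r hr =>
      map_idealOfVars_le (Ideal.mem_map_of_mem _ (hmem r hr))
  · refine (AddEquiv.isRegular_congr (e := quotEquiv.toAddEquiv) ?_).mp hreg
    refine List.forall₂_map_right_iff.mpr (List.forall₂_same.mpr fun r _ x => ?_)
    exact map_mul quotEquiv (Ideal.Quotient.mk I r) x
  · rw [List.length_map, hlen, ringKrullDim_eq_of_ringEquiv quotEquiv]

end IsCMQuot

theorem mem_nsmul_triple_iff {G : Type*} [AddCommMonoid G] {a b c x : G} {n : ℕ} :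
    x ∈ n • ({a, b, c} : Set G) ↔
      ∃ i j l, i + j + l = n ∧ i • a + j • b + l • c = x := by
  induction n generalizing x with
  | zero => simp [eq_comm]
  | succ n ih =>
    simp only [succ_nsmul, Set.mem_add, ih, Set.mem_insert_iff, Set.mem_singleton_iff]
    constructor
    · rintro ⟨_, ⟨i, j, l, rfl, rfl⟩, _, rfl | rfl | rfl, rfl⟩
      · exact ⟨i + 1, j, l, by lia, by module⟩
      · exact ⟨i, j + 1, l, by lia, by module⟩
      · exact ⟨i, j, l + 1, by lia, by module⟩
    · rintro ⟨i, j, l, hn, rfl⟩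
      match i, j, l with
      | i + 1, j, l => exact ⟨_, ⟨i, j, l, by lia, rfl⟩, a, .inl rfl, by module⟩
      | 0, j + 1, l => exact ⟨_, ⟨0, j, l, by lia, rfl⟩, b, .inr (.inl rfl), by module⟩
      | 0, 0, l + 1 => exact ⟨_, ⟨0, 0, l, by lia, rfl⟩, c, .inr (.inr rfl), by module⟩

/-- The weighted edge ideal of the path `x–a–b–y` with weights `p`, `k`, `q` along the path, where
`a = X 0`, `b = X 1`, `x = X 2`, `y = X 3`. -/
noncomputable def pathIdeal (R : Type*) [CommSemiring R] (p q k : ℕ) :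
    Ideal (MvPolynomial (Fin 4) R) :=
  Ideal.span {(X 0) ^ p * (X 2) ^ p, (X 0) ^ k * (X 1) ^ k, (X 1) ^ q * (X 3) ^ q}

/-- The exponent vectors of the three generators of `pathIdeal`. -/
def pathExponents (p q k : ℕ) : Set (Fin 4 →₀ ℕ) :=
  {single 0 p + single 2 p, single 0 k + single 1 k, single 1 q + single 3 q}

/-- The exponent vector of the monomial
`a ^ (k * n - 1) * b ^ (k * (n - 1) + max k q - 1) * x ^ (p - 1) * y ^ (q - 1)`, which witnesses
that the quotient by `pathIdeal R p q k ^ n` has depth less than two when `p ≤ q` and `p < 2 * k`.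
The maximum lets one monomial serve both `q ≤ k` and `k ≤ q`. -/
noncomputable def witnessExponent (p q k n : ℕ) : Fin 4 →₀ ℕ :=
  single 0 (k * n - 1) + single 1 (k * (n - 1) + max k q - 1) + single 2 (p - 1) +
    single 3 (q - 1)

section Path

variable {p q k n : ℕ}

theorem pathIdeal_eq_span_monomial (R : Type*) [CommSemiring R] (p q k : ℕ) :
    pathIdeal R p q k = Ideal.span ((fun e => monomial e (1 : R)) '' pathExponents p q k) := by
  simp [pathIdeal, pathExponents, Set.image_insert_eq, X_pow_eq_monomial, monomial_mul]

theorem pathIdeal_le_span_X (R : Type*) [CommSemiring R] (hp : p ≠ 0) (hq : q ≠ 0) (hk : k ≠ 0) :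
    pathIdeal R p q k ≤ Ideal.span (X '' {0, 1}) := by
  have X_pow_mem {i : Fin 4} (hi : i ∈ ({0, 1} : Set (Fin 4))) {d : ℕ} (hd : d ≠ 0) :
      (X i ^ d : MvPolynomial (Fin 4) R) ∈ Ideal.span (X '' {0, 1}) :=
    Ideal.pow_mem_of_mem _ (Ideal.subset_span (Set.mem_image_of_mem X hi)) d
      (Nat.pos_of_ne_zero hd)
  rw [pathIdeal, Ideal.span_le]
  rintro _ (rfl | rfl | rfl)
  · exact Ideal.mul_mem_right _ _ (X_pow_mem (by simp) hp)
  · exact Ideal.mul_mem_right _ _ (X_pow_mem (by simp) hk)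
  · exact Ideal.mul_mem_right _ _ (X_pow_mem (by simp) hq)

theorem map_renameEquiv_pathIdeal (R : Type*) [CommSemiring R] (p q k : ℕ) :
    (pathIdeal R p q k).map (renameEquiv R (Equiv.swap 0 1 * Equiv.swap 2 3)) =
      pathIdeal R q p k := by
  have h0 : (Equiv.swap 0 1 * Equiv.swap 2 3 : Equiv.Perm (Fin 4)) 0 = 1 := by decide
  have h1 : (Equiv.swap 0 1 * Equiv.swap 2 3 : Equiv.Perm (Fin 4)) 1 = 0 := by decide
  have h2 : (Equiv.swap 0 1 * Equiv.swap 2 3 : Equiv.Perm (Fin 4)) 2 = 3 := by decide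
  have h3 : (Equiv.swap 0 1 * Equiv.swap 2 3 : Equiv.Perm (Fin 4)) 3 = 2 := by decide
  simp only [pathIdeal, Ideal.map_span, Set.image_insert_eq, Set.image_singleton, map_mul, map_pow,
    renameEquiv_apply, rename_X, h0, h1, h2, h3]
  rw [mul_comm (X 1 ^ k), Set.insert_comm, Set.pair_comm, Set.insert_comm]

theorem mem_upperClosure_nsmul_pathExponents {s : Fin 4 →₀ ℕ} :
    s ∈ upperClosure (n • pathExponents p q k) ↔ ∃ i j l, i + j + l = n ∧
      i * p + j * k ≤ s 0 ∧ j * k + l * q ≤ s 1 ∧ i * p ≤ s 2 ∧ l * q ≤ s 3 := by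
  simp only [mem_upperClosure, pathExponents, mem_nsmul_triple_iff]
  constructor
  · rintro ⟨_, ⟨i, j, l, hn, rfl⟩, hs⟩
    exact ⟨i, j, l, hn, by simpa using hs 0, by simpa using hs 1, by simpa using hs 2,
      by simpa using hs 3⟩
  · rintro ⟨i, j, l, hn, h0, h1, h2, h3⟩
    refine ⟨_, ⟨i, j, l, hn, rfl⟩, fun v => ?_⟩
    fin_cases v <;> simpa

theorem two_le_ringKrullDim_quotient_pathIdeal_pow (K : Type*) [Field K] (hp : p ≠ 0)
    (hq : q ≠ 0) (hk : k ≠ 0) (hn : n ≠ 0) :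
    2 ≤ ringKrullDim (MvPolynomial (Fin 4) K ⧸ pathIdeal K p q k ^ n) := by
  have hdim := ringKrullDim_add_card_compl_le
    ((Ideal.pow_le_self hn).trans (pathIdeal_le_span_X K hp hq hk))
  have hcard : Nat.card ↥({0, 1}ᶜ : Set (Fin 4)) = 2 := by
    rw [Nat.card_eq_fintype_card]; decide
  rwa [ringKrullDim_eq_zero_of_field, hcard, zero_add] at hdim

theorem notMem_upperClosure_nsmul_pathExponents {s : Fin 4 →₀ ℕ} (hx : s 2 < p) (hy : s 3 < q)
    (hab : s 0 < n * k ∨ s 1 < n * k) : s ∉ upperClosure (n • pathExponents p q k) := by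
  rw [mem_upperClosure_nsmul_pathExponents]
  rintro ⟨i, j, l, rfl, h0, h1, h2, h3⟩
  obtain rfl : i = 0 := by by_contra hi; nlinarith [Nat.pos_of_ne_zero hi]
  obtain rfl : l = 0 := by by_contra hl; nlinarith [Nat.pos_of_ne_zero hl]
  lia

theorem notMem_upperClosure_nsmul_pathExponents_of_le {s : Fin 4 →₀ ℕ} (hkq : k ≤ q)
    (hx : s 2 < p) (ha : s 0 < (n + 1) * k) (hb : s 1 < n * k + q) :
    s ∉ upperClosure ((n + 1) • pathExponents p q k) := by
  rw [mem_upperClosure_nsmul_pathExponents]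
  rintro ⟨i, j, l, hn, h0, h1, h2, -⟩
  obtain rfl : i = 0 := by by_contra hi; nlinarith [Nat.pos_of_ne_zero hi]
  obtain ⟨l, rfl⟩ : ∃ l', l = l' + 1 := by
    refine Nat.exists_eq_succ_of_ne_zero ?_
    rintro rfl
    obtain rfl : j = n + 1 := by lia
    lia
  obtain rfl : n = j + l := by lia
  nlinarith [Nat.mul_le_mul_left l hkq]

theorem single_add_single_add_witnessExponent_mem (hpq : p ≤ q) (hpk : p < 2 * k)
    (hn : 2 ≤ n) : ∀ i ∈ ({1, 2} : Set (Fin 4)), ∀ j ∈ ({1, 2}ᶜ : Set (Fin 4)),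
      single i 1 + (single j 1 + witnessExponent p q k n) ∈
        upperClosure (n • pathExponents p q k) := by
  obtain ⟨n, rfl⟩ := Nat.exists_eq_add_of_le' hn
  simp only [mem_upperClosure_nsmul_pathExponents]
  intro i hi j hj
  obtain rfl | rfl : j = 0 ∨ j = 3 := by revert hj; fin_cases j <;> simp
  all_goals obtain rfl | rfl := hi
  · exact ⟨0, n + 2, 0, by grind [witnessExponent, Finsupp.add_apply]⟩
  · rcases le_or_gt q k with hqk | hkq
    · exact ⟨1, n + 1, 0, by grind [witnessExponent, Finsupp.add_apply]⟩
    · exact ⟨0, n + 2, 0, by grind [witnessExponent, Finsupp.add_apply]⟩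
  · exact ⟨0, n + 1, 1, by grind [witnessExponent, Finsupp.add_apply]⟩
  · exact ⟨1, n, 1, by grind [witnessExponent, Finsupp.add_apply]⟩

theorem single_one_add_witnessExponent_notMem (hp : p ≠ 0) (hq : q ≠ 0) (hk : k ≠ 0)
    (hn : n ≠ 0) :
    single 1 1 + witnessExponent p q k n ∉ upperClosure (n • pathExponents p q k) := by
  have hkn : k * n ≠ 0 := mul_ne_zero hk hn
  apply notMem_upperClosure_nsmul_pathExponents <;>
    grind [witnessExponent, Finsupp.add_apply]

theorem exists_single_add_witnessExponent_notMem (hp : p ≠ 0) (hq : q ≠ 0) (hk : k ≠ 0)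
    (hn : n ≠ 0) : ∃ j ∈ ({1, 2}ᶜ : Set (Fin 4)),
      single j 1 + witnessExponent p q k n ∉ upperClosure (n • pathExponents p q k) := by
  obtain ⟨n, rfl⟩ := Nat.exists_eq_succ_of_ne_zero hn
  have hkn : k * (n + 1) ≠ 0 := mul_ne_zero hk hn
  rcases le_total q k with hqk | hkq
  · refine ⟨0, by simp, ?_⟩
    apply notMem_upperClosure_nsmul_pathExponents <;>
      grind [witnessExponent, Finsupp.add_apply]
  · refine ⟨3, by simp, ?_⟩
    apply notMem_upperClosure_nsmul_pathExponents_of_le hkq <;>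
      grind [witnessExponent, Finsupp.add_apply]

end Path

theorem two_mul_le_of_isCMQuot_pathIdeal_pow {K : Type*} [Field K] {p q k n : ℕ} (hp : p ≠ 0)
    (hpq : p ≤ q) (hn : 2 ≤ n) (hCM : IsCMQuot (pathIdeal K p q k ^ n)) : 2 * k ≤ p := by
  by_contra! hpk
  have hq : q ≠ 0 := by lia
  have hk : k ≠ 0 := by lia
  have hn₀ : n ≠ 0 := by lia
  obtain ⟨r, hr, t, ht, hrt⟩ := hCM.exists_isWeaklyRegular_pair
    (two_le_ringKrullDim_quotient_pathIdeal_pow K hp hq hk hn₀)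
  rw [pathIdeal_eq_span_monomial, span_monomial_pow] at hrt
  obtain ⟨j, hj, hj_notMem⟩ := exists_single_add_witnessExponent_notMem hp hq hk hn₀
  rcases single_add_mem_or_of_isWeaklyRegular hrt hr ht
    (single_add_single_add_witnessExponent_mem hpq hpk hn) with hbx | hay
  · exact single_one_add_witnessExponent_notMem hp hq hk hn₀ (hbx 1 (by simp))
  · exact hj_notMem (hay j hj)

/-- For the weighted edge ideal `I = (a^p x^p, a^k b^k, b^q y^q)` of the path `x–a–b–y`
in `R = K[a,b,x,y]`: if `R/I^n` is Cohen–Macaulay for some `n ≥ 2`, then `min{p,q} ≥ 2k`.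
Here `a = X 0`, `b = X 1`, `x = X 2`, `y = X 3`. -/
theorem min_ge_two_k_of_cm {K : Type*} [Field K] (p q k : ℕ)
    (hp : 0 < p) (hq : 0 < q) (hk : 0 < k) (n : ℕ) (hn : 2 ≤ n)
    (hCM : IsCMQuot ((Ideal.span ({(X 0) ^ p * (X 2) ^ p, (X 0) ^ k * (X 1) ^ k,
      (X 1) ^ q * (X 3) ^ q} : Set (MvPolynomial (Fin 4) K))) ^ n)) :
    2 * k ≤ min p q := by
  rcases le_total p q with hpq | hqp
  · rw [min_eq_left hpq]
    exact two_mul_le_of_isCMQuot_pathIdeal_pow hp.ne' hpq hn hCM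
  · have hCM' : IsCMQuot (pathIdeal K q p k ^ n) := by
      rw [← map_renameEquiv_pathIdeal, ← Ideal.map_pow]
      exact hCM.map_renameEquiv _
    rw [min_eq_right hqp]
    exact two_mul_le_of_isCMQuot_pathIdeal_pow hq.ne' hqp hn hCM'
end

section
/- Let R = K[a,b,c,x,y,z] and I = ((ab)^m, (bc)^m, (ax)^p, (by)^q, (cz)^r) with positive integers m, p, q, r (the two internal edges have equal weight m). Then for n ≥ max{p,r}/m + 2, the ideal I^n is not Cohen-Macaulay; i.e., R/I^n fails to be Cohen-Macaulay. -/
open MvPolynomial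

/-!
Suppose `J` is a monomial ideal with `R ⧸ J` Cohen–Macaulay of dimension at least `3`, and let
`A + B` contain a power of every variable but one. At the origin, the quotient by the radical of
`A + B` has principal maximal ideal, so divisibility there is total; eliminating one element of a
regular sequence of length `3` therefore leaves a regular sequence of length `2` inside `A + B`.
By the argument behind Hartshorne's connectedness theorem, every element of `R ⧸ J` killed by
`A * B` is then, locally, a sum of an element killed by `A` and one killed by `B`. For a monomial
`f` with `A * B * f ⊆ J`, comparing coefficients of `f` gives `α * f ∈ J` or `β * f ∈ J` for any
monomials `α ∈ A` and `β ∈ B`.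

For `J = I ^ (k + 1)` this is violated by `f = b^(qk) c^r x^N` if `q ≤ m`, and by
`f = a^p b^(mk) c^r y^N` if `m < q`, as soon as `r < m * k`; the symmetry `a ↔ c`, `x ↔ z` of the
tree then exchanges `p` and `r`.
-/

open RingTheory.Sequence IsLocalRing Submodule

section PrincipalMaximalIdeal

variable {R : Type*} [CommRing R] [IsLocalRing R] [IsNoetherianRing R]

lemma exists_associated_pow_of_maximalIdeal_eq_span_singleton {x : R}
    (hx : maximalIdeal R = Ideal.span {x}) {a : R} (ha : a ≠ 0) :
    ∃ n : ℕ, Associated (x ^ n) a := by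
  have hfin : FiniteMultiplicity x a := by
    by_contra hinf
    have hmem : a ∈ ⨅ n : ℕ, maximalIdeal R ^ n := by
      simp only [mem_iInf, hx, Ideal.span_singleton_pow, Ideal.mem_span_singleton]
      exact FiniteMultiplicity.not_iff_forall.1 hinf
    rw [Ideal.iInf_pow_eq_bot_of_isLocalRing _ Ideal.IsPrime.ne_top'] at hmem
    exact ha hmem
  obtain ⟨u, hau, hxu⟩ := hfin.exists_eq_pow_mul_and_not_dvd
  have hu : IsUnit u := by
    rwa [← Ideal.mem_span_singleton, ← hx, mem_maximalIdeal, mem_nonunits_iff, not_not] at hxu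
  exact ⟨_, hu.unit, hau.symm⟩

lemma preValuationRing_of_maximalIdeal_isPrincipal (h : (maximalIdeal R).IsPrincipal) :
    PreValuationRing R := by
  obtain ⟨x, hx⟩ := h
  refine PreValuationRing.iff_dvd_total.2 ⟨fun a b ↦ ?_⟩
  rcases eq_or_ne a 0 with rfl | ha
  · exact .inr (dvd_zero b)
  rcases eq_or_ne b 0 with rfl | hb
  · exact .inl (dvd_zero a)
  obtain ⟨i, hi⟩ := exists_associated_pow_of_maximalIdeal_eq_span_singleton hx ha
  obtain ⟨j, hj⟩ := exists_associated_pow_of_maximalIdeal_eq_span_singleton hx hb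
  rw [← hi.dvd_iff_dvd_left, ← hj.dvd_iff_dvd_right, ← hi.dvd_iff_dvd_right,
    ← hj.dvd_iff_dvd_left]
  exact (le_total i j).imp (pow_dvd_pow x) (pow_dvd_pow x)

lemma preValuationRing_quotient_of_maximalIdeal_le_span_singleton_sup {x : R} {Q : Ideal R}
    (hx : x ∈ maximalIdeal R) (h : maximalIdeal R ≤ Ideal.span {x} ⊔ Q) :
    PreValuationRing (R ⧸ Q) := by
  rcases subsingleton_or_nontrivial (R ⧸ Q) with _ | _
  · exact ⟨fun _ _ ↦ ⟨0, .inl (Subsingleton.elim _ _)⟩⟩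
  have : IsLocalRing (R ⧸ Q) := .of_surjective' _ Ideal.Quotient.mk_surjective
  refine preValuationRing_of_maximalIdeal_isPrincipal ⟨Ideal.Quotient.mk Q x, ?_⟩
  calc maximalIdeal (R ⧸ Q)
      = (maximalIdeal R).map (Ideal.Quotient.mk Q) :=
        (map_maximalIdeal_of_surjective _ Ideal.Quotient.mk_surjective).symm
    _ = (Ideal.span {x}).map (Ideal.Quotient.mk Q) := by
        refine le_antisymm ((Ideal.map_mono h).trans ?_)
          (Ideal.map_mono ((Ideal.span_singleton_le_iff_mem _).2 hx))
        rw [Ideal.map_sup, Ideal.map_quotient_self, sup_bot_eq]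
    _ = Ideal.span {Ideal.Quotient.mk Q x} := by rw [Ideal.map_span, Set.image_singleton]

end PrincipalMaximalIdeal

section RegularSequence

variable {R M : Type*} [CommRing R] [AddCommGroup M] [Module R M]

lemma isWeaklyRegular_append_singleton_iff {rs : List R} {t : R} :
    IsWeaklyRegular M (rs ++ [t]) ↔
      IsWeaklyRegular M rs ∧ IsSMulRegular (M ⧸ (Ideal.ofList rs • ⊤ : Submodule R M)) t := by
  rw [isWeaklyRegular_append_iff, isWeaklyRegular_singleton_iff]

lemma isWeaklyRegular_append_singleton_congr {rs : List R} {s t : R}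
    (hst : s - t ∈ Ideal.ofList rs) :
    IsWeaklyRegular M (rs ++ [s]) ↔ IsWeaklyRegular M (rs ++ [t]) := by
  have hsmul : ∀ y : M ⧸ (Ideal.ofList rs • ⊤ : Submodule R M), s • y = t • y := by
    rintro ⟨y⟩
    refine (Submodule.Quotient.eq _).2 ?_
    rw [← sub_smul]
    exact smul_mem_smul hst mem_top
  simp only [isWeaklyRegular_append_singleton_iff, IsSMulRegular, hsmul]

section Local

variable [IsLocalRing R] [IsNoetherian R M] {D : Ideal R}

lemma exists_isWeaklyRegular_cons_of_mk_dvd_mk {r t : R} {rs : List R}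
    (hmem : ∀ s ∈ r :: t :: rs, s ∈ maximalIdeal R) (h : IsWeaklyRegular M (r :: t :: rs))
    (hrt : Ideal.Quotient.mk D.radical r ∣ Ideal.Quotient.mk D.radical t) :
    ∃ g ∈ D, IsWeaklyRegular M (g :: r :: rs) := by
  obtain ⟨c, hc⟩ := hrt
  obtain ⟨v, rfl⟩ := Ideal.Quotient.mk_surjective c
  obtain ⟨k, hk⟩ : t - r * v ∈ D.radical := Ideal.Quotient.eq.1 (by rw [hc, map_mul])
  have hlast : IsWeaklyRegular M ((r :: rs) ++ [t]) :=
    isWeaklyRegular_of_perm_of_subset_maximalIdeal h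
      ((List.perm_append_singleton t rs).symm.cons r) hmem
  have helim : IsWeaklyRegular M ((r :: rs) ++ [t - r * v]) := by
    refine (isWeaklyRegular_append_singleton_congr ?_).1 hlast
    rw [sub_sub_cancel]
    exact Ideal.mul_mem_right _ _ (Ideal.subset_span List.mem_cons_self)
  have hpow : IsWeaklyRegular M ((r :: rs) ++ [(t - r * v) ^ (k + 1)]) := by
    rw [isWeaklyRegular_append_singleton_iff] at helim ⊢
    exact ⟨helim.1, helim.2.pow _⟩
  refine ⟨(t - r * v) ^ (k + 1), D.pow_mem_of_pow_mem hk k.le_succ,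
    isWeaklyRegular_of_perm_of_subset_maximalIdeal hpow (List.perm_append_singleton _ _) ?_⟩
  have hmemPow : (t - r * v) ^ (k + 1) ∈ maximalIdeal R :=
    Ideal.pow_mem_of_mem _ (sub_mem (hmem t (by simp)) (Ideal.mul_mem_right _ _ (hmem r (by simp))))
      _ k.succ_pos
  simp only [List.forall_mem_cons, List.forall_mem_append] at hmem ⊢
  exact ⟨⟨hmem.1, hmem.2.2⟩, hmemPow, List.forall_mem_nil _⟩

theorem exists_isWeaklyRegular_of_preValuationRing_quotient_radical
    [PreValuationRing (R ⧸ D.radical)] {r : R} {rs : List R}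
    (hmem : ∀ s ∈ r :: rs, s ∈ maximalIdeal R) (h : IsWeaklyRegular M (r :: rs)) :
    ∃ gs : List R, gs.length = rs.length ∧ (∀ g ∈ gs, g ∈ D) ∧ IsWeaklyRegular M gs := by
  induction rs generalizing M r with
  | nil => exact ⟨[], rfl, List.forall_mem_nil _, .nil R M⟩
  | cons t rs ih =>
    obtain ⟨u, hu, g, hgD, hg⟩ : ∃ u ∈ maximalIdeal R, ∃ g ∈ D,
        IsWeaklyRegular M (g :: u :: rs) := by
      rcases ValuationRing.dvd_total (Ideal.Quotient.mk D.radical r)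
        (Ideal.Quotient.mk D.radical t) with hrt | htr
      · exact ⟨r, hmem r (by simp), exists_isWeaklyRegular_cons_of_mk_dvd_mk hmem h hrt⟩
      · have hswap : (r :: t :: rs).Perm (t :: r :: rs) := .swap _ _ _
        exact ⟨t, hmem t (by simp), exists_isWeaklyRegular_cons_of_mk_dvd_mk
          (fun s hs ↦ hmem s (hswap.mem_iff.2 hs))
          (isWeaklyRegular_of_perm_of_subset_maximalIdeal h hswap hmem) htr⟩
    rw [isWeaklyRegular_cons_iff] at hg
    obtain ⟨gs, hlen, hgsD, hgs⟩ := ih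
      (List.forall_mem_cons.2 ⟨hu, fun s hs ↦ hmem s (by simp [hs])⟩) hg.2
    exact ⟨g :: gs, congrArg (· + 1) hlen, List.forall_mem_cons.2 ⟨hgD, hgsD⟩, hgs.cons hg.1⟩

end Local

theorem torsionBySet_mul_le_sup_of_isWeaklyRegular {A B : Ideal R} {g₁ g₂ : R}
    (h₁ : g₁ ∈ A ⊔ B) (h₂ : g₂ ∈ A ⊔ B) (h : IsWeaklyRegular M [g₁, g₂]) :
    torsionBySet R M (A * B : Ideal R) ≤ torsionBySet R M A ⊔ torsionBySet R M B := by
  intro F hF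
  simp only [mem_torsionBySet_iff, Subtype.forall, SetLike.mem_coe] at hF
  obtain ⟨a₁, ha₁, b₁, hb₁, rfl⟩ := Submodule.mem_sup.1 h₁
  obtain ⟨a₂, ha₂, b₂, hb₂, rfl⟩ := Submodule.mem_sup.1 h₂
  rw [isWeaklyRegular_cons_iff, isWeaklyRegular_singleton_iff] at h
  obtain ⟨hreg₁, hreg₂⟩ := h
  have hcross : (a₂ + b₂) • b₁ • F = (a₁ + b₁) • b₂ • F := by
    linear_combination (norm := module)
      hF _ (Ideal.mul_mem_mul ha₂ hb₁) - hF _ (Ideal.mul_mem_mul ha₁ hb₂)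
  obtain ⟨U, hU⟩ : ∃ U : M, (a₁ + b₁) • U = b₁ • F := by
    have hzero : (Submodule.Quotient.mk (b₁ • F) : QuotSMulTop (a₁ + b₁) M) = 0 := by
      refine hreg₂.right_eq_zero_of_smul ?_
      rw [← Submodule.Quotient.mk_smul, hcross, Submodule.Quotient.mk_eq_zero]
      exact smul_mem_pointwise_smul _ _ _ mem_top
    rw [Submodule.Quotient.mk_eq_zero, mem_smul_pointwise_iff_exists] at hzero
    exact hzero.imp fun U hU ↦ hU.2
  refine mem_sup.2 ⟨U, ?_, F - U, ?_, add_sub_cancel U F⟩ <;>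
    simp only [mem_torsionBySet_iff, Subtype.forall, SetLike.mem_coe]
  · intro a ha
    refine hreg₁.right_eq_zero_of_smul ?_
    rw [smul_comm, hU, ← mul_smul, hF _ (Ideal.mul_mem_mul ha hb₁)]
  · intro b hb
    refine hreg₁.right_eq_zero_of_smul ?_
    linear_combination (norm := module) hF _ (Ideal.mul_mem_mul ha₁ hb) - b • hU

end RegularSequence

section Localization

variable {R M : Type*} [CommRing R] [AddCommGroup M] [Module R M]

lemma exists_smul_mem_torsionBy_sup_of_isLocalizedModule {N : Type*} [AddCommGroup N] [Module R N]
    (S : Submonoid R) (φ : M →ₗ[R] N) [IsLocalizedModule S φ] {a b : R} {F : M}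
    (hF : φ F ∈ torsionBy R N a ⊔ torsionBy R N b) :
    ∃ s ∈ S, s • F ∈ torsionBy R M a ⊔ torsionBy R M b := by
  obtain ⟨U, hU, V, hV, hUV⟩ := mem_sup.1 hF
  rw [mem_torsionBy_iff] at hU hV
  obtain ⟨⟨u, s⟩, hu⟩ := IsLocalizedModule.surj S φ U
  change (s : R) • U = φ u at hu
  have hau : φ (a • u) = 0 := by rw [map_smul, ← hu, smul_comm, hU, smul_zero]
  have hbv : φ (b • ((s : R) • F - u)) = 0 := by
    rw [map_smul, map_sub, map_smul, ← hUV, ← hu, smul_add, add_sub_cancel_left, smul_comm, hV,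
      smul_zero]
  obtain ⟨c₁, hc₁⟩ := (IsLocalizedModule.eq_zero_iff S φ).1 hau
  obtain ⟨c₂, hc₂⟩ := (IsLocalizedModule.eq_zero_iff S φ).1 hbv
  rw [Submonoid.smul_def] at hc₁ hc₂
  refine ⟨c₁ * c₂ * s, (c₁ * c₂ * s).2, mem_sup.2 ⟨((c₁ : R) * c₂) • u, ?_,
    ((c₁ : R) * c₂) • ((s : R) • F - u), ?_, by module⟩⟩ <;> rw [mem_torsionBy_iff]
  · linear_combination (norm := module) (c₂ : R) • hc₁
  · linear_combination (norm := module) (c₁ : R) • hc₂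

lemma map_mem_torsionBySet_map (S : Type*) {N : Type*} [CommRing S] [Algebra R S]
    [AddCommGroup N] [Module R N] [Module S N] [IsScalarTower R S N] (φ : M →ₗ[R] N)
    {J : Ideal R} {F : M} (hF : F ∈ torsionBySet R M J) :
    φ F ∈ torsionBySet S N (J.map (algebraMap R S)) := by
  rw [Ideal.map, ← torsionBySet_eq_torsionBySet_span]
  refine (mem_torsionBySet_iff _ _).2 ?_
  rintro ⟨_, c, hc, rfl⟩
  rw [algebraMap_smul, ← map_smul, (mem_torsionBySet_iff _ _).1 hF ⟨c, hc⟩, map_zero]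

theorem exists_smul_mem_torsionBy_sup_of_isWeaklyRegular [IsNoetherianRing R] [Module.Finite R M]
    (𝔭 : Ideal R) [𝔭.IsPrime] {A B : Ideal R} {x : R}
    (hx𝔭 : x ∈ 𝔭) (hx : 𝔭 ≤ Ideal.span {x} ⊔ (A ⊔ B).radical) {rs : List R} (hlen : rs.length = 3)
    (hmem : ∀ r ∈ rs, r ∈ 𝔭) (hrs : IsWeaklyRegular M rs) {F : M}
    (hF : F ∈ torsionBySet R M (A * B : Ideal R)) {a b : R} (ha : a ∈ A) (hb : b ∈ B) :
    ∃ s ∉ 𝔭, s • F ∈ torsionBy R M a ⊔ torsionBy R M b := by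
  let S := Localization.AtPrime 𝔭
  let N := LocalizedModule 𝔭.primeCompl M
  let φ : M →ₗ[R] N := LocalizedModule.mkLinearMap 𝔭.primeCompl M
  have : IsNoetherianRing S := IsLocalization.isNoetherianRing 𝔭.primeCompl S inferInstance
  have : Module.Finite S N := Module.Finite.of_isLocalizedModule 𝔭.primeCompl φ
  let D : Ideal S := (A ⊔ B).map (algebraMap R S)
  have hmax : maximalIdeal S ≤ Ideal.span {algebraMap R S x} ⊔ D.radical := by
    rw [← Localization.AtPrime.map_eq_maximalIdeal]
    refine (Ideal.map_mono hx).trans ?_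
    rw [Ideal.map_sup, Ideal.map_span, Set.image_singleton]
    exact sup_le_sup_left (Ideal.map_radical_le _) _
  have : PreValuationRing (S ⧸ D.radical) :=
    preValuationRing_quotient_of_maximalIdeal_le_span_singleton_sup
      ((IsLocalization.AtPrime.to_map_mem_maximal_iff S 𝔭 x).2 hx𝔭) hmax
  obtain ⟨r₁, r₂, r₃, rfl⟩ := List.length_eq_three.1 hlen
  obtain ⟨gs, hgsLen, hgsD, hgs⟩ :=
    exists_isWeaklyRegular_of_preValuationRing_quotient_radical (D := D)
      (List.forall_mem_map.2 fun r hr ↦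
        (IsLocalization.AtPrime.to_map_mem_maximal_iff S 𝔭 r).2 (hmem r hr))
      (hrs.of_isLocalizedModule S 𝔭.primeCompl φ)
  obtain ⟨g₁, g₂, rfl⟩ := List.length_eq_two.1 hgsLen
  simp only [D, Ideal.map_sup, List.forall_mem_cons] at hgsD
  have hφF : φ F ∈ torsionBySet S N
      (A.map (algebraMap R S) * B.map (algebraMap R S) : Ideal S) := by
    rw [← Ideal.map_mul]
    exact map_mem_torsionBySet_map S φ hF
  have hsup := torsionBySet_mul_le_sup_of_isWeaklyRegular hgsD.1 hgsD.2.1 hgs hφF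
  obtain ⟨U, hU, V, hV, hUV⟩ := mem_sup.1 hsup
  refine exists_smul_mem_torsionBy_sup_of_isLocalizedModule 𝔭.primeCompl φ
    (mem_sup.2 ⟨U, ?_, V, ?_, hUV⟩)
  · simpa using (mem_torsionBySet_iff _ _).1 hU ⟨_, Ideal.mem_map_of_mem _ ha⟩
  · simpa using (mem_torsionBySet_iff _ _).1 hV ⟨_, Ideal.mem_map_of_mem _ hb⟩

end Localization

section MonomialIdeal

variable {R σ : Type*} [CommSemiring R] {J : Ideal (MvPolynomial σ R)}

/-- Monomial ideals, that is, ideals spanned by monomials with coefficient `1`, encoded by the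
equivalent property that `J` contains every monomial occurring in one of its elements. -/
def IsMonomialIdeal (J : Ideal (MvPolynomial σ R)) : Prop :=
  ∀ h ∈ J, ∀ d ∈ h.support, monomial d (1 : R) ∈ J

lemma IsMonomialIdeal.coeff_eq_zero_of_monomial_mul_mem (hJ : IsMonomialIdeal J)
    {γ f : σ →₀ ℕ} (hγ : monomial (γ + f) (1 : R) ∉ J) {h : MvPolynomial σ R}
    (hh : monomial γ 1 * h ∈ J) : coeff f h = 0 := by
  by_contra hne
  refine hγ (hJ _ hh _ ?_)
  rwa [mem_support_iff, coeff_monomial_mul, one_mul]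

variable {ι : Type*} (g : ι → σ →₀ ℕ) (n : ℕ)

open scoped Pointwise in
lemma mem_span_range_monomial_pow_iff {h : MvPolynomial σ R} :
    h ∈ Ideal.span (Set.range fun i ↦ monomial (g i) (1 : R)) ^ n ↔
      ∀ d ∈ h.support, ∃ k : ι →₀ ℕ, k.degree = n ∧ Finsupp.linearCombination ℕ g k ≤ d := by
  have hgen : (Set.range fun i ↦ monomial (g i) (1 : R)) ^ n =
      (fun d ↦ monomial d 1) '' (Finsupp.linearCombination ℕ g '' {k | k.degree = n}) := by
    rw [← Set.image_univ, Finsupp.image_pow_eq_finsuppProd_image, Set.image_image]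
    simp only [Set.subset_univ, and_true, Finsupp.linearCombination_apply, monomial_pow, one_pow,
      monomial_finsupp_sum_index, map_one, one_mul]
  rw [Ideal.span, Submodule.span_pow, hgen]
  exact mem_ideal_span_monomial_image.trans (by simp only [Set.exists_mem_image, Set.mem_ofPred_eq])

lemma monomial_mem_span_range_monomial_pow_iff [Nontrivial R] {d : σ →₀ ℕ} :
    monomial d 1 ∈ Ideal.span (Set.range fun i ↦ monomial (g i) (1 : R)) ^ n ↔
      ∃ k : ι →₀ ℕ, k.degree = n ∧ Finsupp.linearCombination ℕ g k ≤ d := by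
  classical
  rw [mem_span_range_monomial_pow_iff, support_monomial, if_neg one_ne_zero]
  simp only [Finset.mem_singleton, forall_eq]

lemma isMonomialIdeal_span_range_monomial_pow [Nontrivial R] :
    IsMonomialIdeal (Ideal.span (Set.range fun i ↦ monomial (g i) (1 : R)) ^ n) :=
  fun _ hh d hd ↦ (monomial_mem_span_range_monomial_pow_iff g n).2
    ((mem_span_range_monomial_pow_iff g n).1 hh d hd)

end MonomialIdeal

section IdealOfVars

variable {R σ τ : Type*} [CommRing R]

lemma mem_idealOfVars_iff_constantCoeff_eq_zero {h : MvPolynomial σ R} :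
    h ∈ idealOfVars σ R ↔ constantCoeff h = 0 := by
  have := mem_pow_idealOfVars_iff' 1 h
  simpa only [pow_one, Nat.lt_one_iff, Finsupp.degree_eq_zero_iff, forall_eq,
    constantCoeff_eq] using this

instance isPrime_idealOfVars [IsDomain R] : (idealOfVars σ R).IsPrime := by
  have : idealOfVars σ R = RingHom.ker constantCoeff :=
    Ideal.ext fun _ ↦ mem_idealOfVars_iff_constantCoeff_eq_zero
  exact this ▸ RingHom.ker_isPrime _

lemma map_rename_idealOfVars_le (e : σ → τ) :
    (idealOfVars σ R).map (rename e) ≤ idealOfVars τ R := by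
  rw [idealOfVars, Ideal.map_span, Ideal.span_le]
  rintro _ ⟨_, ⟨i, rfl⟩, rfl⟩
  exact Ideal.subset_span ⟨e i, (rename_X e i).symm⟩

lemma ringKrullDim_add_card_le_ringKrullDim_quotient [IsNoetherianRing R] [Finite τ]
    {J : Ideal (MvPolynomial σ R)} {e : τ → σ} (he : Function.Injective e)
    (hJ : J ≤ RingHom.ker (killCompl (R := R) he)) :
    ringKrullDim R + Nat.card τ ≤ ringKrullDim (MvPolynomial σ R ⧸ J) := by
  rw [← MvPolynomial.ringKrullDim_of_isNoetherianRing]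
  refine ringKrullDim_le_of_surjective (Ideal.Quotient.lift J (killCompl he).toRingHom hJ) ?_
  exact Ideal.Quotient.lift_surjective_of_surjective _ _
    fun h ↦ ⟨rename e h, killCompl_rename_app he h⟩

end IdealOfVars

section CohenMacaulay

variable {K σ τ : Type*} [Field K] {J : Ideal (MvPolynomial σ K)}

lemma IsCMQuot.exists_isWeaklyRegular (h : IsCMQuot J) {k : ℕ}
    (hk : (k : WithBot ℕ∞) ≤ ringKrullDim (MvPolynomial σ K ⧸ J)) :
    ∃ rs : List (MvPolynomial σ K), rs.length = k ∧ (∀ r ∈ rs, r ∈ idealOfVars σ K) ∧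
      IsWeaklyRegular (MvPolynomial σ K ⧸ J) rs := by
  obtain ⟨rs, hmem, hreg, hlen⟩ := h
  have hk_le : k ≤ rs.length := by exact Nat.cast_le.1 (hk.trans_eq hlen.symm)
  refine ⟨rs.take k, List.length_take_of_le hk_le, fun r hr ↦ hmem r (List.mem_of_mem_take hr), ?_⟩
  have := hreg.toIsWeaklyRegular
  rw [← List.take_append_drop k rs, isWeaklyRegular_append_iff] at this
  exact this.1

lemma IsCMQuot.map_rename (h : IsCMQuot J) (e : σ ≃ τ) :
    IsCMQuot (J.map (rename e : MvPolynomial σ K →ₐ[K] MvPolynomial τ K)) := by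
  obtain ⟨rs, hmem, hreg, hlen⟩ := h
  let φ : (MvPolynomial σ K ⧸ J) ≃+* (MvPolynomial τ K ⧸ J.map (rename e)) :=
    Ideal.quotientEquiv J _ (renameEquiv K e).toRingEquiv rfl
  refine ⟨rs.map (rename e), List.forall_mem_map.2 fun r hr ↦
    map_rename_idealOfVars_le e (Ideal.mem_map_of_mem _ (hmem r hr)), ?_, ?_⟩
  · refine (φ.toAddEquiv.isRegular_congr (List.forall₂_map_right_iff.2
      (List.forall₂_same.2 fun r _ ↦ ?_))).1 hreg
    rintro ⟨x⟩
    exact map_mul φ (Ideal.Quotient.mk J r) (Ideal.Quotient.mk J x)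
  · rw [List.length_map, hlen, ringKrullDim_eq_of_ringEquiv φ]

theorem IsMonomialIdeal.not_isCMQuot [Finite σ] (hJ : IsMonomialIdeal J)
    (hdim : 3 ≤ ringKrullDim (MvPolynomial σ K ⧸ J)) {A B : Ideal (MvPolynomial σ K)} (e : σ)
    (hrad : ∀ i ≠ e, X i ∈ (A ⊔ B).radical) {f α β : σ →₀ ℕ}
    (hAB : A * B ≤ J.colon {monomial f (1 : K)}) (hαA : monomial α 1 ∈ A) (hβB : monomial β 1 ∈ B)
    (hα : monomial (α + f) (1 : K) ∉ J) (hβ : monomial (β + f) (1 : K) ∉ J) : ¬ IsCMQuot J := by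
  intro hCM
  obtain ⟨rs, hlen, hmem, hrs⟩ := hCM.exists_isWeaklyRegular (k := 3) hdim
  have hvars : idealOfVars σ K ≤ Ideal.span {X e} ⊔ (A ⊔ B).radical := by
    rw [idealOfVars, Ideal.span_le]
    rintro _ ⟨i, rfl⟩
    by_cases hi : i = e
    · exact hi ▸ mem_sup_left (Ideal.mem_span_singleton_self _)
    · exact mem_sup_right (hrad i hi)
  have hF : Ideal.Quotient.mk J (monomial f 1) ∈
      torsionBySet (MvPolynomial σ K) (MvPolynomial σ K ⧸ J) (A * B : Ideal _) :=
    (mem_torsionBySet_iff _ _).2 fun c ↦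
      Ideal.Quotient.eq_zero_iff_mem.2 (mem_colon_singleton.1 (hAB c.2))
  obtain ⟨s, hs, hsF⟩ := exists_smul_mem_torsionBy_sup_of_isWeaklyRegular (idealOfVars σ K)
    (Ideal.subset_span ⟨e, rfl⟩) hvars hlen hmem hrs hF hαA hβB
  obtain ⟨U, hU, V, hV, hUV⟩ := mem_sup.1 hsF
  obtain ⟨u, rfl⟩ := Ideal.Quotient.mk_surjective U
  obtain ⟨v, rfl⟩ := Ideal.Quotient.mk_surjective V
  rw [mem_torsionBy_iff] at hU hV
  have hu : coeff f u = 0 :=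
    hJ.coeff_eq_zero_of_monomial_mul_mem hα (Ideal.Quotient.eq_zero_iff_mem.1 hU)
  have hv : coeff f v = 0 :=
    hJ.coeff_eq_zero_of_monomial_mul_mem hβ (Ideal.Quotient.eq_zero_iff_mem.1 hV)
  have hdiff : u + v - s * monomial f 1 ∈ J := Ideal.Quotient.eq.1 hUV
  have hconst : coeff f (u + v - s * monomial f 1) = -constantCoeff s := by
    have := coeff_mul_monomial 0 f 1 s
    rw [zero_add, mul_one] at this
    rw [coeff_sub, coeff_add, hu, hv, this, add_zero, zero_sub, constantCoeff_eq]
  refine hs (mem_idealOfVars_iff_constantCoeff_eq_zero.2 (neg_eq_zero.1 ?_))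
  rw [← hconst]
  exact hJ.coeff_eq_zero_of_monomial_mul_mem hα (J.mul_mem_left _ hdiff)

theorem IsMonomialIdeal.not_isCMQuot_of_X_pow [Finite σ] (hJ : IsMonomialIdeal J)
    (hdim : 3 ≤ ringKrullDim (MvPolynomial σ K ⧸ J)) {s t : Set σ} {e : σ}
    (hcover : ∀ i ≠ e, i ∈ s ∨ i ∈ t) {N : ℕ} {f : σ →₀ ℕ}
    (hmul : ∀ i ∈ s, ∀ j ∈ t, monomial (.single i N + .single j N + f) (1 : K) ∈ J) {i j : σ}
    (his : i ∈ s) (hi : monomial (.single i N + f) (1 : K) ∉ J)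
    (hjt : j ∈ t) (hj : monomial (.single j N + f) (1 : K) ∉ J) : ¬ IsCMQuot J := by
  let powers (u : Set σ) : Ideal (MvPolynomial σ K) :=
    Ideal.span ((fun l ↦ monomial (.single l N) 1) '' u)
  have hmem {u : Set σ} {l : σ} (hl : l ∈ u) : monomial (.single l N) 1 ∈ powers u :=
    Ideal.subset_span ⟨l, hl, rfl⟩
  refine hJ.not_isCMQuot hdim e (A := powers s) (B := powers t) (fun l hl ↦ ⟨N, ?_⟩) ?_
    (hmem his) (hmem hjt) hi hj
  · rw [X_pow_eq_monomial]
    exact (hcover l hl).elim (fun h ↦ mem_sup_left (hmem h)) (fun h ↦ mem_sup_right (hmem h))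
  · rw [Ideal.span_mul_span', Ideal.span_le]
    rintro _ ⟨_, ⟨l, hl, rfl⟩, _, ⟨l', hl', rfl⟩, rfl⟩
    refine mem_colon_singleton.2 ?_
    simpa only [smul_eq_mul, monomial_mul, mul_one] using hmul l hl l' hl'

end CohenMacaulay

section Tree

variable {K : Type*} [Field K]

variable (K) in
/-- The edge ideal of the tree with edges `ab`, `bc`, `ax`, `by`, `cz` of weights `m`, `m`, `p`,
`q`, `r`. The variables `a, b, c, x, y, z` are `X 0, …, X 5`. -/
noncomputable def treeEdgeIdeal (m p q r : ℕ) : Ideal (MvPolynomial (Fin 6) K) :=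
  Ideal.span {X 0 ^ m * X 1 ^ m, X 1 ^ m * X 2 ^ m, X 0 ^ p * X 3 ^ p, X 1 ^ q * X 4 ^ q,
    X 2 ^ r * X 5 ^ r}

/-- The exponent vectors of the five generators of `treeEdgeIdeal`. -/
noncomputable def treeEdgeExponent (m p q r : ℕ) : Fin 5 → Fin 6 →₀ ℕ :=
  ![.single 0 m + .single 1 m, .single 1 m + .single 2 m, .single 0 p + .single 3 p,
    .single 1 q + .single 4 q, .single 2 r + .single 5 r]

variable (m p q r : ℕ)

lemma treeEdgeIdeal_eq_span_range : treeEdgeIdeal K m p q r =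
    Ideal.span (Set.range fun i ↦ monomial (treeEdgeExponent m p q r i) (1 : K)) := by
  have hgen (i j : Fin 6) (k : ℕ) : (X i ^ k * X j ^ k : MvPolynomial (Fin 6) K) =
      monomial (.single i k + .single j k) 1 := by
    rw [X_pow_eq_monomial, X_pow_eq_monomial, monomial_mul, one_mul]
  rw [treeEdgeIdeal]
  congr 1
  ext h
  simp [Set.mem_range, Fin.exists_fin_succ, treeEdgeExponent, hgen, eq_comm]

lemma isMonomialIdeal_treeEdgeIdeal_pow (n : ℕ) :
    IsMonomialIdeal (treeEdgeIdeal K m p q r ^ n) := by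
  rw [treeEdgeIdeal_eq_span_range]
  exact isMonomialIdeal_span_range_monomial_pow _ n

lemma map_rename_treeEdgeIdeal :
    (treeEdgeIdeal K m p q r).map (rename (Equiv.swap 0 2 * Equiv.swap 3 5 : Equiv.Perm (Fin 6))) =
      treeEdgeIdeal K m r q p := by
  have h₀ : (Equiv.swap 0 2 * Equiv.swap 3 5 : Equiv.Perm (Fin 6)) 0 = 2 := by decide
  have h₁ : (Equiv.swap 0 2 * Equiv.swap 3 5 : Equiv.Perm (Fin 6)) 1 = 1 := by decide
  have h₂ : (Equiv.swap 0 2 * Equiv.swap 3 5 : Equiv.Perm (Fin 6)) 2 = 0 := by decide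
  have h₃ : (Equiv.swap 0 2 * Equiv.swap 3 5 : Equiv.Perm (Fin 6)) 3 = 5 := by decide
  have h₄ : (Equiv.swap 0 2 * Equiv.swap 3 5 : Equiv.Perm (Fin 6)) 4 = 4 := by decide
  have h₅ : (Equiv.swap 0 2 * Equiv.swap 3 5 : Equiv.Perm (Fin 6)) 5 = 3 := by decide
  rw [treeEdgeIdeal, treeEdgeIdeal, Ideal.map_span]
  congr 1
  simp only [Set.image_insert_eq, Set.image_singleton, map_mul, map_pow, rename_X, h₀, h₁, h₂, h₃,
    h₄, h₅]
  ext h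
  simp only [Set.mem_insert_iff, Set.mem_singleton_iff]
  grind

variable {m p q r}

lemma monomial_mem_treeEdgeIdeal_pow_iff {n : ℕ} {d : Fin 6 →₀ ℕ} :
    monomial d (1 : K) ∈ treeEdgeIdeal K m p q r ^ n ↔
      ∃ u w v t s : ℕ, u + w + v + t + s = n ∧ m * u + p * v ≤ d 0 ∧
        m * u + m * w + q * t ≤ d 1 ∧ m * w + r * s ≤ d 2 ∧ p * v ≤ d 3 ∧ q * t ≤ d 4 ∧
        r * s ≤ d 5 := by
  have hiff (k : Fin 5 →₀ ℕ) :
      (k.degree = n ∧ Finsupp.linearCombination ℕ (treeEdgeExponent m p q r) k ≤ d) ↔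
      k 0 + k 1 + k 2 + k 3 + k 4 = n ∧ m * k 0 + p * k 2 ≤ d 0 ∧
        m * k 0 + m * k 1 + q * k 3 ≤ d 1 ∧ m * k 1 + r * k 4 ≤ d 2 ∧ p * k 2 ≤ d 3 ∧
        q * k 3 ≤ d 4 ∧ r * k 4 ≤ d 5 := by
    simp [Finsupp.le_def, Finsupp.linearCombination_apply, Finsupp.sum_fintype, treeEdgeExponent,
      Fin.sum_univ_five, Finsupp.degree_eq_sum, Fin.forall_fin_succ, mul_comm]
  rw [treeEdgeIdeal_eq_span_range, monomial_mem_span_range_monomial_pow_iff]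
  simp only [hiff]
  constructor
  · rintro ⟨k, hk⟩
    exact ⟨k 0, k 1, k 2, k 3, k 4, hk⟩
  · rintro ⟨u, w, v, t, s, h⟩
    exact ⟨Finsupp.equivFunOnFinite.symm ![u, w, v, t, s], h⟩

lemma three_le_ringKrullDim_quotient_treeEdgeIdeal_pow (hm : 0 < m) (hp : 0 < p) (hq : 0 < q)
    (hr : 0 < r) {n : ℕ} (hn : n ≠ 0) :
    3 ≤ ringKrullDim (MvPolynomial (Fin 6) K ⧸ treeEdgeIdeal K m p q r ^ n) := by
  let toLeaves := killCompl (R := K) (Fin.natAdd_injective 3 3)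
  have hcore (i : Fin 3) : toLeaves (X (Fin.castAdd 3 i)) = 0 := by
    refine (aeval_X _ _).trans (dif_neg ?_)
    rintro ⟨j, hj⟩
    have := congrArg Fin.val hj
    simp only [Fin.val_natAdd, Fin.val_castAdd] at this
    omega
  have hle : treeEdgeIdeal K m p q r ≤ RingHom.ker toLeaves := by
    rw [treeEdgeIdeal, Ideal.span_le]
    have h₀ : toLeaves (X 0) = 0 := hcore 0
    have h₁ : toLeaves (X 1) = 0 := hcore 1
    have h₂ : toLeaves (X 2) = 0 := hcore 2
    simp [Set.insert_subset_iff, h₀, h₁, h₂, hm.ne', hp.ne', hq.ne', hr.ne']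
  simpa [ringKrullDim_eq_zero_of_field] using
    ringKrullDim_add_card_le_ringKrullDim_quotient _ ((Ideal.pow_le_self hn).trans hle)

/-- The exponent of `b^(qk) c^r x^N`, which is multiplied into `treeEdgeIdeal ^ (k + 1)` by the
product of the ideals `(a^N, b^N, z^N)` and `(c^N, y^N)` when `N` is large. -/
noncomputable def pendantWitness (q r k N : ℕ) : Fin 6 →₀ ℕ :=
  .single 1 (q * k) + .single 2 r + .single 3 N

/-- The exponent of `a^p b^(mk) c^r y^N`, which is multiplied into `treeEdgeIdeal ^ (k + 1)` by the
product of the ideals `(b^N, x^N, z^N)` and `(a^N, c^N)` when `N` is large. -/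
noncomputable def internalWitness (m p r k N : ℕ) : Fin 6 →₀ ℕ :=
  .single 0 p + .single 1 (m * k) + .single 2 r + .single 4 N

variable {k N : ℕ}

lemma monomial_b_pow_add_pendantWitness_notMem (hm : 0 < m) (hp : 0 < p) (hq : 0 < q) (hr : 0 < r)
    (hrm : r < m * (k + 1)) :
    monomial (.single 1 N + pendantWitness q r k N) (1 : K) ∉
      treeEdgeIdeal K m p q r ^ (k + 1) := by
  rw [monomial_mem_treeEdgeIdeal_pow_iff]
  rintro ⟨u, w, v, t, s, hsum, ha, -, hc, -, hy, hz⟩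
  obtain ⟨rfl, rfl⟩ : u = 0 ∧ v = 0 := by simpa [pendantWitness, hm.ne', hp.ne'] using ha
  obtain rfl : t = 0 := by simpa [pendantWitness, hq.ne'] using hy
  obtain rfl : s = 0 := by simpa [pendantWitness, hr.ne'] using hz
  obtain rfl : w = k + 1 := by omega
  have : m * (k + 1) ≤ r := by simpa [pendantWitness] using hc
  omega

lemma monomial_y_pow_add_pendantWitness_notMem (hm : 0 < m) (hp : 0 < p) (hq : 0 < q) (hr : 0 < r)
    (hqm : q ≤ m) :
    monomial (.single 4 N + pendantWitness q r k N) (1 : K) ∉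
      treeEdgeIdeal K m p q r ^ (k + 1) := by
  rw [monomial_mem_treeEdgeIdeal_pow_iff]
  rintro ⟨u, w, v, t, s, hsum, ha, hb, -, -, -, hz⟩
  obtain ⟨rfl, rfl⟩ : u = 0 ∧ v = 0 := by simpa [pendantWitness, hm.ne', hp.ne'] using ha
  obtain rfl : s = 0 := by simpa [pendantWitness, hr.ne'] using hz
  have : q * (k + 1) ≤ q * k := calc
    q * (k + 1) = q * w + q * t := by rw [← hsum]; ring
    _ ≤ m * w + q * t := by gcongr
    _ ≤ q * k := by simpa [pendantWitness] using hb
  exact absurd (Nat.le_of_mul_le_mul_left this hq) (by omega)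

lemma monomial_X_pow_mul_X_pow_add_pendantWitness_mem (hNm : m * (k + 1) ≤ N)
    (hNp : p * (k + 1) ≤ N) (hNq : q * (k + 1) ≤ N) (hNr : r * (k + 1) ≤ N) :
    ∀ i ∈ ({0, 1, 5} : Set (Fin 6)), ∀ j ∈ ({2, 4} : Set (Fin 6)),
      monomial (.single i N + .single j N + pendantWitness q r k N) (1 : K) ∈
        treeEdgeIdeal K m p q r ^ (k + 1) := by
  simp only [monomial_mem_treeEdgeIdeal_pow_iff, pendantWitness]
  rintro i (rfl | rfl | rfl) j (rfl | rfl)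
  · exact ⟨0, 0, k + 1, 0, 0, by simp, by simp; omega⟩
  · exact ⟨0, 0, k + 1, 0, 0, by simp, by simp; omega⟩
  · exact ⟨0, k + 1, 0, 0, 0, by simp, by simp; omega⟩
  · exact ⟨0, 0, 0, k + 1, 0, by simp, by simp; omega⟩
  · exact ⟨0, 0, 0, 0, k + 1, by simp, by simp; omega⟩
  · exact ⟨0, 0, 0, k, 1, by simp, by simp; grind⟩

lemma add_add_le_of_mul_add_mul_add_mul_le {u w t : ℕ} (hm : 0 < m) (hmq : m ≤ q)
    (h : m * u + m * w + q * t ≤ m * k) : u + w + t ≤ k := by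
  refine Nat.le_of_mul_le_mul_left (le_trans ?_ h) hm
  rw [mul_add, mul_add]
  gcongr

lemma monomial_x_pow_add_internalWitness_notMem (hm : 0 < m) (hp : 0 < p) (hr : 0 < r)
    (hmq : m < q) (hrm : r < m * k) :
    monomial (.single 3 N + internalWitness m p r k N) (1 : K) ∉
      treeEdgeIdeal K m p q r ^ (k + 1) := by
  rw [monomial_mem_treeEdgeIdeal_pow_iff]
  rintro ⟨u, w, v, t, s, hsum, ha, hb, hc, -, -, hz⟩
  obtain rfl : s = 0 := by simpa [internalWitness, hr.ne'] using hz
  replace ha : m * u + p * v ≤ p := by simpa [internalWitness] using ha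
  replace hb : m * u + m * w + q * t ≤ m * k := by simpa [internalWitness] using hb
  replace hc : m * w ≤ r := by simpa [internalWitness] using hc
  have huwt := add_add_le_of_mul_add_mul_add_mul_le hm hmq.le hb
  have hv : v ≤ 1 := Nat.le_of_mul_le_mul_left (by omega : p * v ≤ p * 1) hp
  obtain rfl : v = 1 := by omega
  obtain rfl : u = 0 := by simpa [hm.ne'] using ha
  obtain rfl : k = w + t := by omega
  have htq : q * t ≤ m * t := by rw [mul_add] at hb; omega
  obtain rfl : t = 0 := by
    by_contra ht
    exact htq.not_gt (Nat.mul_lt_mul_of_pos_right hmq (Nat.pos_of_ne_zero ht))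
  exact (hc.trans_lt hrm).false

lemma monomial_a_pow_add_internalWitness_notMem (hm : 0 < m) (hp : 0 < p) (hr : 0 < r)
    (hmq : m ≤ q) :
    monomial (.single 0 N + internalWitness m p r k N) (1 : K) ∉
      treeEdgeIdeal K m p q r ^ (k + 1) := by
  rw [monomial_mem_treeEdgeIdeal_pow_iff]
  rintro ⟨u, w, v, t, s, hsum, -, hb, -, hx, -, hz⟩
  obtain rfl : v = 0 := by simpa [internalWitness, hp.ne'] using hx
  obtain rfl : s = 0 := by simpa [internalWitness, hr.ne'] using hz
  have huwt : u + w + t ≤ k :=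
    add_add_le_of_mul_add_mul_add_mul_le hm hmq (by simpa [internalWitness] using hb)
  omega

lemma monomial_X_pow_mul_X_pow_add_internalWitness_mem (hNm : m * (k + 1) ≤ N)
    (hNp : p * (k + 1) ≤ N) (hNq : q * (k + 1) ≤ N) (hNr : r * (k + 1) ≤ N) :
    ∀ i ∈ ({1, 3, 5} : Set (Fin 6)), ∀ j ∈ ({0, 2} : Set (Fin 6)),
      monomial (.single i N + .single j N + internalWitness m p r k N) (1 : K) ∈
        treeEdgeIdeal K m p q r ^ (k + 1) := by
  simp only [monomial_mem_treeEdgeIdeal_pow_iff, internalWitness]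
  rintro i (rfl | rfl | rfl) j (rfl | rfl)
  · exact ⟨0, 0, 0, k + 1, 0, by simp, by simp; omega⟩
  · exact ⟨0, 0, 0, k + 1, 0, by simp, by simp; omega⟩
  · exact ⟨0, 0, k + 1, 0, 0, by simp, by simp; omega⟩
  · exact ⟨0, k, 1, 0, 0, by simp, by simp; grind⟩
  · exact ⟨k, 0, 0, 0, 1, by simp, by simp; grind⟩
  · exact ⟨0, 0, 0, 0, k + 1, by simp, by simp; omega⟩

theorem not_isCMQuot_treeEdgeIdeal_pow_of_lt (hp : 0 < p) (hq : 0 < q) (hr : 0 < r) {n : ℕ}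
    (hn : r + m < m * n) : ¬ IsCMQuot (treeEdgeIdeal K m p q r ^ n) := by
  have hm : 0 < m := Nat.pos_of_mul_pos_right (Nat.zero_lt_of_lt hn)
  obtain ⟨k, rfl⟩ : ∃ k, n = k + 1 :=
    Nat.exists_eq_succ_of_ne_zero (by rintro rfl; omega)
  have hrk : r < m * k := by rw [mul_add_one] at hn; omega
  have hmono := isMonomialIdeal_treeEdgeIdeal_pow (K := K) m p q r (k + 1)
  have hdim := three_le_ringKrullDim_quotient_treeEdgeIdeal_pow (K := K) hm hp hq hr k.succ_ne_zero
  obtain ⟨N, hNm, hNp, hNq, hNr⟩ : ∃ N, m * (k + 1) ≤ N ∧ p * (k + 1) ≤ N ∧ q * (k + 1) ≤ N ∧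
      r * (k + 1) ≤ N :=
    ⟨m * (k + 1) + p * (k + 1) + q * (k + 1) + r * (k + 1), by omega, by omega, by omega, by omega⟩
  rcases le_or_gt q m with hqm | hmq
  · refine hmono.not_isCMQuot_of_X_pow hdim (e := 3) (fun i hi ↦ ?_)
      (monomial_X_pow_mul_X_pow_add_pendantWitness_mem hNm hNp hNq hNr)
      (i := 1) (by simp) (monomial_b_pow_add_pendantWitness_notMem hm hp hq hr (by omega))
      (j := 4) (by simp) (monomial_y_pow_add_pendantWitness_notMem hm hp hq hr hqm)
    fin_cases i <;> simp at hi ⊢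
  · refine hmono.not_isCMQuot_of_X_pow hdim (e := 4) (fun i hi ↦ ?_)
      (monomial_X_pow_mul_X_pow_add_internalWitness_mem hNm hNp hNq hNr)
      (i := 3) (by simp) (monomial_x_pow_add_internalWitness_notMem hm hp hr hmq hrk)
      (j := 0) (by simp) (monomial_a_pow_add_internalWitness_notMem hm hp hr hmq.le)
    fin_cases i <;> simp at hi ⊢

end Tree

theorem not_cm_of_equal_internal_weights_general {K : Type*} [Field K] {m p q r n : ℕ}
    (hm : 0 < m) (hp : 0 < p) (hq : 0 < q) (hr : 0 < r) (hn : (min p r : ℚ) / m + 1 < n) :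
    ¬ IsCMQuot (treeEdgeIdeal K m p q r ^ n) := by
  have hm' : (0 : ℚ) < m := Nat.cast_pos.2 hm
  rw [div_add_one hm'.ne', div_lt_iff₀' hm'] at hn
  norm_cast at hn
  rcases le_total r p with hrp | hpr
  · rw [min_eq_right hrp] at hn
    exact not_isCMQuot_treeEdgeIdeal_pow_of_lt hp hq hr hn
  · rw [min_eq_left hpr] at hn
    intro hCM
    have hswap := hCM.map_rename (Equiv.swap 0 2 * Equiv.swap 3 5)
    rw [Ideal.map_pow, map_rename_treeEdgeIdeal] at hswap
    exact not_isCMQuot_treeEdgeIdeal_pow_of_lt hr hq hp hn hswap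

/-- For the weighted edge ideal `I = ((ab)^m, (bc)^m, (ax)^p, (by)^q, (cz)^r)` of the tree
with edges `{ab, bc, ax, by, cz}` in `R = K[a,b,c,x,y,z]` (here `a = X 0`, `b = X 1`,
`c = X 2`, `x = X 3`, `y = X 4`, `z = X 5`), if `n ≥ max{p,r}/m + 2` then `R/I^n` is
not Cohen–Macaulay. -/
theorem not_cm_of_equal_internal_weights {K : Type*} [Field K] (m p q r : ℕ)
    (hm : 0 < m) (hp : 0 < p) (hq : 0 < q) (hr : 0 < r) :
    ∀ n : ℕ, ((max p r : ℚ) / m + 2 ≤ n) →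
      ¬ IsCMQuot ((Ideal.span ({(X 0) ^ m * (X 1) ^ m, (X 1) ^ m * (X 2) ^ m,
          (X 0) ^ p * (X 3) ^ p, (X 1) ^ q * (X 4) ^ q, (X 2) ^ r * (X 5) ^ r} :
          Set (MvPolynomial (Fin 6) K))) ^ n) := by
  exact fun n hn ↦ not_cm_of_equal_internal_weights_general hm hp hq hr ((add_lt_add_of_le_of_lt
    (div_le_div_of_nonneg_right min_le_max m.cast_nonneg) one_lt_two).trans_le hn)
end
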